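/- arXiv:1306.2697 — 4 statements merged into one kernel-verified Lean document; each statement's English description precedes it below -/
import Mathlib

section
/- Let X and Y be two sets, S ⊆ X × D(Y) a relation, μ ∈ D(X) a distribution, and ψ ∈ D(D(Y)) a distribution over distributions. If μ S̿ ψ (double lifting) then μ S̄ π(ψ) (single lifting of the flattening). -/
open scoped ENNReal

namespace PCKA

/-- A probabilistic automaton over the (non-silent) action alphabet `α`, with state
space `σ`.  Transition labels are `Option α`, where `none` plays the role of the
silent action `τ`; `trans x a μ` means `x —a→ μ` where `μ` is a (countably
supported) probability distribution over states, `init` is the initial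
distribution and `final` the set of final states. -/
structure PAut (α : Type) (σ : Type) where
  trans : σ → Option α → PMF σ → Prop
  init : PMF σ
  final : Set σ

/-- The lifting `S̄ ⊆ D(X) × D(Y)` of a relation `S ⊆ X × D(Y)`: `μ S̄ ν` iff there
are weights `p n` summing to `1`, states `x n` and distributions `νs n` with
`μ = Σ_n p n · δ_{x n}`, `x n S νs n` for each `n`, and `ν = Σ_n p n · νs n`. -/
def Lift {X Y : Type} (S : X → PMF Y → Prop) (μ : PMF X) (ν : PMF Y) : Prop :=
  ∃ (p : ℕ → ℝ≥0∞) (x : ℕ → X) (νs : ℕ → PMF Y),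
    (∑' n, p n) = 1 ∧
    (∀ s, μ s = ∑' n, p n * (PMF.pure (x n)) s) ∧
    (∀ n, S (x n) (νs n)) ∧
    (∀ t, ν t = ∑' n, p n * (νs n) t)

/-- The double lifting `T̿ ⊆ D(X) × D(Z)` of a relation `T ⊆ X × Z`, via a weight
function `w`. -/
def DLift {X Z : Type} (T : X → Z → Prop) (μ : PMF X) (ψ : PMF Z) : Prop :=
  ∃ w : X → Z → ℝ≥0∞,
    (∀ x z, 0 < w x z → T x z) ∧
    (∀ x, (∑' z, w x z) = μ x) ∧
    (∀ z, (∑' x, w x z) = ψ z)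

/-- Flattening `π : D(D(Y)) → D(Y)`, `π(ψ) = Σ_{ν} ψ(ν)·ν`. -/
noncomputable def flat {Y : Type} (ψ : PMF (PMF Y)) : PMF Y := ψ.bind id

/-- Single transition step, with the τ-transitions extended by reflexivity
(`x —τ→ δ_x` is always allowed). -/
def step {α σ : Type} (P : PAut α σ) (a : Option α) (x : σ) (μ : PMF σ) : Prop :=
  P.trans x a μ ∨ (a = none ∧ μ = PMF.pure x)

/-- Weak internal moves `⇒`: the reflexive-transitive closure of the lifted
(extended) τ-transition relation on distributions. -/
def WeakTau {α σ : Type} (P : PAut α σ) : PMF σ → PMF σ → Prop :=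
  Relation.ReflTransGen (Lift (step P none))

/-- Weak `a`-transition `μ ⇒^a μ'`: `μ ⇒ μ₁ —ā→ μ₂ ⇒ μ'`. -/
def WeakStep {α σ : Type} (P : PAut α σ) (a : Option α) (μ μ' : PMF σ) : Prop :=
  ∃ μ₁ μ₂, WeakTau P μ μ₁ ∧ Lift (step P a) μ₁ μ₂ ∧ WeakTau P μ₂ μ'

/-- A probabilistic simulation from `P` to `Q` (Deng et al. style). -/
structure IsSimulation {α σ τ' : Type} (P : PAut α σ) (Q : PAut α τ')
    (S : σ → PMF τ' → Prop) : Prop where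
  init : ∃ ν₀', WeakTau Q Q.init ν₀' ∧ Lift S P.init ν₀'
  step : ∀ x a μ', P.trans x a μ' → ∀ ν, S x ν →
    ∃ ν', WeakStep Q a ν ν' ∧ Lift S μ' ν'
  final : ∀ x ν, x ∈ P.final → S x ν →
    ∃ ν', WeakTau Q ν ν' ∧ ∀ y ∈ ν'.support, y ∈ Q.final

/-- A probabilistic weak forward simulation from `P` to `Q` (Segala style). -/
structure IsWFSimulation {α σ τ' : Type} (P : PAut α σ) (Q : PAut α τ')
    (S : σ → PMF τ' → Prop) : Prop where
  init : ∃ ψ₀ : PMF (PMF τ'), DLift S P.init ψ₀ ∧ WeakTau Q Q.init (flat ψ₀)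
  step : ∀ x a μ', P.trans x a μ' → ∀ ν, S x ν →
    ∃ ψ : PMF (PMF τ'), WeakStep Q a ν (flat ψ) ∧ DLift S μ' ψ
  final : ∀ x ν, x ∈ P.final → S x ν →
    ∃ ψ : PMF (PMF τ'), (∀ ρ ∈ ψ.support, ∀ y ∈ ρ.support, y ∈ Q.final) ∧
      WeakTau Q ν (flat ψ)

/-- `P ≤ Q`: there exists a probabilistic simulation from `P` to `Q`. -/
def Sim {α σ τ' : Type} (P : PAut α σ) (Q : PAut α τ') : Prop :=
  ∃ S, IsSimulation P Q S

/-- Simulation equivalence `P ≡ Q`. -/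
def SimEquiv {α σ τ' : Type} (P : PAut α σ) (Q : PAut α τ') : Prop :=
  Sim P Q ∧ Sim Q P

/-- Convex combination `p·μ + (1−p)·ν` of two distributions. -/
noncomputable def mix {X : Type} (p : ℝ≥0∞) (hp : p ≤ 1) (μ ν : PMF X) : PMF X :=
  ⟨fun x => p * μ x + (1 - p) * ν x, by
    refine ENNReal.summable.hasSum_iff.mpr ?_
    rw [ENNReal.tsum_add, ENNReal.tsum_mul_left, ENNReal.tsum_mul_left,
      μ.tsum_coe, ν.tsum_coe, mul_one, mul_one, add_tsub_cancel_of_le hp]⟩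

/-- Product distribution `μ × ν`, with `(μ × ν)(x,y) = μ(x)·ν(y)`. -/
noncomputable def pprod {X Y : Type} (μ : PMF X) (ν : PMF Y) : PMF (X × Y) :=
  μ.bind fun x => ν.map fun y => (x, y)

/-- The skip automaton `1`: one state, no transitions, that state is final. -/
noncomputable def skip (α : Type) : PAut α Unit :=
  ⟨fun _ _ _ => False, PMF.pure (), Set.univ⟩

/-- The deadlock automaton `0`: one state, no transitions, no final state. -/
noncomputable def deadlock (α : Type) : PAut α Unit :=
  ⟨fun _ _ _ => False, PMF.pure (), ∅⟩

/-- Nondeterministic choice `P + Q`: disjoint union of the two automata (realised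
by the sum type) plus a fresh initial state `z = none` with `z —τ→ μ₀` and
`z —τ→ ν₀`. -/
noncomputable def nchoice {α σ τ' : Type} (P : PAut α σ) (Q : PAut α τ') :
    PAut α (Option (σ ⊕ τ')) where
  trans := fun s a μ =>
    match s with
    | none => a = none ∧
        (μ = P.init.map (fun x => some (Sum.inl x)) ∨
         μ = Q.init.map (fun y => some (Sum.inr y)))
    | some (Sum.inl x) => ∃ μ', P.trans x a μ' ∧ μ = μ'.map (fun x => some (Sum.inl x))
    | some (Sum.inr y) => ∃ ν', Q.trans y a ν' ∧ μ = ν'.map (fun y => some (Sum.inr y))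
  init := PMF.pure none
  final := {s | (∃ x ∈ P.final, s = some (Sum.inl x)) ∨ (∃ y ∈ Q.final, s = some (Sum.inr y))}

/-- Sequential composition `P · Q`: disjoint union (realised by the sum type),
with a τ-transition from each final state of `P` to the initial distribution of
`Q`; initial distribution that of `P`, final states those of `Q`. -/
noncomputable def pseq {α σ τ' : Type} (P : PAut α σ) (Q : PAut α τ') :
    PAut α (σ ⊕ τ') where
  trans := fun s a μ =>
    match s with
    | Sum.inl x =>
        (∃ μ', P.trans x a μ' ∧ μ = μ'.map Sum.inl) ∨
        (a = none ∧ x ∈ P.final ∧ μ = Q.init.map Sum.inr)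
    | Sum.inr y => ∃ ν', Q.trans y a ν' ∧ μ = ν'.map Sum.inr
  init := P.init.map Sum.inl
  final := {s | ∃ y ∈ Q.final, s = Sum.inr y}

/-- Kleene star `P*`: a fresh state `z = none` which is initial and the only
final state, with `z —τ→ μ₀` and `x —τ→ δ_z` for each final state `x` of `P`. -/
noncomputable def pstar {α σ : Type} (P : PAut α σ) : PAut α (Option σ) where
  trans := fun s a μ =>
    match s with
    | none => a = none ∧ μ = P.init.map some
    | some x =>
        (∃ μ', P.trans x a μ' ∧ μ = μ'.map some) ∨
        (a = none ∧ x ∈ P.final ∧ μ = PMF.pure none)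
  init := PMF.pure none
  final := {none}

/-- Probabilistic choice `P ⊕_p Q`: disjoint union with initial distribution
`p·μ₀ + (1−p)·ν₀`. -/
noncomputable def pchoice {α σ τ' : Type} (p : ℝ≥0∞) (hp : p ≤ 1)
    (P : PAut α σ) (Q : PAut α τ') : PAut α (σ ⊕ τ') where
  trans := fun s a μ =>
    match s with
    | Sum.inl x => ∃ μ', P.trans x a μ' ∧ μ = μ'.map Sum.inl
    | Sum.inr y => ∃ ν', Q.trans y a ν' ∧ μ = ν'.map Sum.inr
  init := mix p hp (P.init.map Sum.inl) (Q.init.map Sum.inr)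
  final := {s | (∃ x ∈ P.final, s = Sum.inl x) ∨ (∃ y ∈ Q.final, s = Sum.inr y)}

/-- CSP-style parallel composition `P ∥_A Q` synchronising on the frame `A`:
actions in `A` must be performed jointly, all other actions (including τ) are
interleaved. -/
noncomputable def par {α σ τ' : Type} (A : Set α) (P : PAut α σ) (Q : PAut α τ') :
    PAut α (σ × τ') where
  trans := fun s a μπ => ∃ μ ν, μπ = pprod μ ν ∧
    ((∃ b ∈ A, a = some b ∧ P.trans s.1 a μ ∧ Q.trans s.2 a ν) ∨
     ((∀ b ∈ A, a ≠ some b) ∧ P.trans s.1 a μ ∧ ν = PMF.pure s.2) ∨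
     ((∀ b ∈ A, a ≠ some b) ∧ Q.trans s.2 a ν ∧ μ = PMF.pure s.1))
  init := pprod P.init Q.init
  final := {s | s.1 ∈ P.final ∧ s.2 ∈ Q.final}

/-! A double lifting of `S` is a coupling `κ` of `μ` and `ψ` supported on `S`. Drawing a pair
`(x, ν)` from `κ` and returning `x`, respectively a sample of `ν`, gives `μ` and `π(ψ)`, so `κ`
provides the weights of the single lifting. Its support is countable, hence `κ` is the image of a
distribution on `ℕ`; the enumeration has to stay inside the support even at indices of weight zero,
because the single lifting demands `x n S νs n` for every `n`. -/

theorem map_congr_of_eqOn_support {I J : Type*} {κ : PMF I} {f g : I → J}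
    (h : Set.EqOn f g κ.support) : κ.map f = κ.map g := by
  ext j
  rw [PMF.map_apply, PMF.map_apply]
  refine tsum_congr fun i => ?_
  by_cases hi : i ∈ κ.support
  · rw [h hi]
  · simp only [(κ.apply_eq_zero_iff i).2 hi, ite_self]

theorem exists_map_nat_eq {I : Type*} (κ : PMF I) :
    ∃ (p : PMF ℕ) (e : ℕ → I), (∀ n, e n ∈ κ.support) ∧ p.map e = κ := by
  obtain ⟨e, he⟩ := κ.support_countable.exists_eq_range κ.support_nonempty
  have e_invFun : Set.EqOn (e ∘ Function.invFun e) id κ.support := fun i hi =>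
    Function.invFun_eq (he.subset hi)
  refine ⟨κ.map (Function.invFun e), e, fun n => he.superset (Set.mem_range_self n), ?_⟩
  rw [PMF.map_comp, map_congr_of_eqOn_support e_invFun, PMF.map_id]

theorem lift_map_bind {I : Type*} {X Y : Type} {S : X → PMF Y → Prop} (κ : PMF I) (x : I → X)
    (ν : I → PMF Y) (hS : ∀ i ∈ κ.support, S (x i) (ν i)) :
    Lift S (κ.map x) (κ.bind ν) := by
  obtain ⟨p, e, he, rfl⟩ := exists_map_nat_eq κ
  rw [PMF.map_comp, PMF.bind_map]
  exact ⟨p, x ∘ e, ν ∘ e, p.tsum_coe, fun _ => rfl, fun n => hS (e n) (he n), fun _ => rfl⟩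

theorem DLift.exists_coupling {X Z : Type} {T : X → Z → Prop} {μ : PMF X} {ψ : PMF Z}
    (h : DLift T μ ψ) :
    ∃ κ : PMF (X × Z), (∀ i ∈ κ.support, T i.1 i.2) ∧
      κ.map Prod.fst = μ ∧ κ.map Prod.snd = ψ := by
  obtain ⟨w, hT, hμ, hψ⟩ := h
  have tsum_w : ∑' i : X × Z, w i.1 i.2 = 1 := by
    simp only [ENNReal.tsum_prod', hμ, μ.tsum_coe]
  let κ : PMF (X × Z) := ⟨fun i => w i.1 i.2, ENNReal.summable.hasSum_iff.2 tsum_w⟩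
  have κ_apply (x : X) (z : Z) : κ (x, z) = w x z := rfl
  refine ⟨κ, fun i hi => hT i.1 i.2 ((κ.apply_pos_iff i).2 hi), ?_, ?_⟩
  · ext x
    rw [PMF.map_apply, ENNReal.tsum_prod', ENNReal.tsum_comm]
    simp only [κ_apply, tsum_ite_eq', hμ]
  · ext z
    rw [PMF.map_apply, ENNReal.tsum_prod']
    simp only [κ_apply, tsum_ite_eq', hψ]

theorem flat_map {I : Type*} {Y : Type} (κ : PMF I) (ν : I → PMF Y) : flat (κ.map ν) = κ.bind ν :=
  PMF.bind_map κ ν id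

/-- if `μ S̿ ψ` (double lifting) then `μ S̄ π(ψ)` (single lifting of
the flattening). -/
theorem dlift_to_lift_flat {X Y : Type} (S : X → PMF Y → Prop)
    (μ : PMF X) (ψ : PMF (PMF Y)) (h : DLift S μ ψ) :
    Lift S μ (flat ψ) := by
  obtain ⟨κ, hS, rfl, rfl⟩ := h.exists_coupling
  rw [flat_map]
  exact lift_map_bind κ Prod.fst Prod.snd hS

end PCKA
end

section
/- A relation S ⊆ P × D(Q) between a probabilistic automaton P and distributions over a probabilistic automaton Q is a probabilistic simulation if and only if it is a probabilistic weak forward simulation. -/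
open scoped ENNReal

namespace PCKA

/-!
Both liftings can be sampled from a single distribution `q` on `ℕ`: `Lift S μ ν` says that `μ` is
the law of `x n` and `ν` the mixture of the `νs n` for some sequence of pairs with `S (x n) (νs n)`,
while `DLift S μ ψ` says that `μ` and `ψ` are the laws of `x n` and `νs n`. For the double lifting
this uses that a coupling has countable support. As the flattening of the law of `νs n` is the
mixture of the `νs n`, the distributions related to `μ` by `Lift S` are exactly the flattenings of
those related to it by `DLift S`.
-/

section Distributions

variable {A B : Type*}

theorem map_fst_apply (j : PMF (A × B)) (a : A) : j.map Prod.fst a = ∑' b, j (a, b) := by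
  classical
  rw [PMF.map_apply, ENNReal.tsum_prod', ENNReal.tsum_comm]
  exact tsum_congr fun b => tsum_ite_eq' a fun a' => j (a', b)

theorem map_snd_apply (j : PMF (A × B)) (b : B) : j.map Prod.snd b = ∑' a, j (a, b) := by
  classical
  rw [PMF.map_apply, ENNReal.tsum_prod']
  exact tsum_congr fun a => tsum_ite_eq' b fun b' => j (a, b')

theorem map_apply_eq_tsum_pure (p : PMF A) (f : A → B) (b : B) :
    p.map f b = ∑' a, p a * PMF.pure (f a) b := by
  rw [← PMF.bind_pure_comp, PMF.bind_apply, Function.comp_def]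

theorem map_congr_of_eqOn_support_s2 {p : PMF A} {f g : A → B} (h : Set.EqOn f g p.support) :
    p.map f = p.map g := by
  ext b
  simp only [map_apply_eq_tsum_pure]
  refine tsum_congr fun a => ?_
  by_cases ha : a ∈ p.support
  · rw [h ha]
  · rw [(p.apply_eq_zero_iff a).mpr ha, zero_mul, zero_mul]

theorem exists_nat_map_eq (p : PMF A) :
    ∃ (q : PMF ℕ) (d : ℕ → A), (∀ n, d n ∈ p.support) ∧ q.map d = p := by
  obtain ⟨d, hd⟩ := p.support_countable.exists_eq_range p.support_nonempty
  have invFun_section : Set.EqOn (d ∘ Function.invFun d) id p.support := fun a ha =>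
    Function.invFun_eq (hd ▸ ha : a ∈ Set.range d)
  refine ⟨p.map (Function.invFun d), d, fun n => hd ▸ Set.mem_range_self n, ?_⟩
  rw [PMF.map_comp, map_congr_of_eqOn_support_s2 invFun_section, PMF.map_id]

end Distributions

section Flattening

variable {Y : Type}

theorem flat_pure (ν : PMF Y) : flat (PMF.pure ν) = ν :=
  PMF.pure_bind ν id

theorem flat_map_s2 {A : Type*} (q : PMF A) (νs : A → PMF Y) : flat (q.map νs) = q.bind νs :=
  PMF.bind_map q νs id

theorem support_flat_subset_iff {ψ : PMF (PMF Y)} {F : Set Y} :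
    (flat ψ).support ⊆ F ↔ ∀ ρ ∈ ψ.support, ρ.support ⊆ F := by
  rw [flat, PMF.support_bind, Set.iUnion₂_subset_iff]
  rfl

end Flattening

section Liftings

variable {X Y Z : Type}

theorem lift_iff_exists_nat {S : X → PMF Y → Prop} {μ : PMF X} {ν : PMF Y} :
    Lift S μ ν ↔ ∃ (q : PMF ℕ) (x : ℕ → X) (νs : ℕ → PMF Y),
      (∀ n, S (x n) (νs n)) ∧ q.map x = μ ∧ q.bind νs = ν := by
  constructor
  · rintro ⟨p, x, νs, hp, hμ, hS, hν⟩
    let q : PMF ℕ := ⟨p, hp ▸ ENNReal.summable.hasSum⟩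
    refine ⟨q, x, νs, hS, ?_, ?_⟩
    · ext s
      rw [hμ, map_apply_eq_tsum_pure]
      rfl
    · ext t
      rw [hν, PMF.bind_apply]
      rfl
  · rintro ⟨q, x, νs, hS, rfl, rfl⟩
    exact ⟨q, x, νs, q.tsum_coe, map_apply_eq_tsum_pure q x, hS, PMF.bind_apply q νs⟩

theorem dlift_iff_exists_coupling {T : X → Z → Prop} {μ : PMF X} {ψ : PMF Z} :
    DLift T μ ψ ↔ ∃ j : PMF (X × Z),
      (∀ c ∈ j.support, T c.1 c.2) ∧ j.map Prod.fst = μ ∧ j.map Prod.snd = ψ := by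
  constructor
  · rintro ⟨w, hT, hμ, hψ⟩
    have total_weight : ∑' c : X × Z, w c.1 c.2 = 1 := by
      rw [ENNReal.tsum_prod', tsum_congr hμ, μ.tsum_coe]
    let j : PMF (X × Z) := ⟨fun c => w c.1 c.2, total_weight ▸ ENNReal.summable.hasSum⟩
    refine ⟨j, fun c hc => hT c.1 c.2 ((j.apply_pos_iff c).mpr hc), ?_, ?_⟩
    · ext x
      exact (map_fst_apply j x).trans (hμ x)
    · ext z
      exact (map_snd_apply j z).trans (hψ z)
  · rintro ⟨j, hT, rfl, rfl⟩
    exact ⟨fun x z => j (x, z), fun x z hw => hT (x, z) ((j.apply_pos_iff _).mp hw),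
      fun x => (map_fst_apply j x).symm, fun z => (map_snd_apply j z).symm⟩

theorem dlift_iff_exists_nat {T : X → Z → Prop} {μ : PMF X} {ψ : PMF Z} :
    DLift T μ ψ ↔ ∃ (q : PMF ℕ) (x : ℕ → X) (z : ℕ → Z),
      (∀ n, T (x n) (z n)) ∧ q.map x = μ ∧ q.map z = ψ := by
  rw [dlift_iff_exists_coupling]
  constructor
  · rintro ⟨j, hT, rfl, rfl⟩
    obtain ⟨q, d, hd, rfl⟩ := exists_nat_map_eq j
    exact ⟨q, Prod.fst ∘ d, Prod.snd ∘ d, fun n => hT (d n) (hd n),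
      (PMF.map_comp d q Prod.fst).symm, (PMF.map_comp d q Prod.snd).symm⟩
  · rintro ⟨q, x, z, hT, rfl, rfl⟩
    refine ⟨q.map fun n => (x n, z n), ?_, PMF.map_comp _ q Prod.fst, PMF.map_comp _ q Prod.snd⟩
    intro c hc
    obtain ⟨n, -, rfl⟩ := (PMF.mem_support_map_iff _ _ _).mp hc
    exact hT n

theorem lift_iff_exists_dlift {S : X → PMF Y → Prop} {μ : PMF X} {ν : PMF Y} :
    Lift S μ ν ↔ ∃ ψ : PMF (PMF Y), DLift S μ ψ ∧ flat ψ = ν := by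
  simp only [lift_iff_exists_nat, dlift_iff_exists_nat]
  constructor
  · rintro ⟨q, x, νs, hS, hμ, hν⟩
    exact ⟨q.map νs, ⟨q, x, νs, hS, hμ, rfl⟩, (flat_map_s2 q νs).trans hν⟩
  · rintro ⟨_, ⟨q, x, νs, hS, hμ, rfl⟩, hν⟩
    exact ⟨q, x, νs, hS, hμ, (flat_map_s2 q νs).symm.trans hν⟩

theorem DLift.lift_flat {S : X → PMF Y → Prop} {μ : PMF X} {ψ : PMF (PMF Y)}
    (h : DLift S μ ψ) : Lift S μ (flat ψ) :=
  lift_iff_exists_dlift.mpr ⟨ψ, h, rfl⟩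

end Liftings

/-- a relation `S ⊆ P × D(Q)` is a probabilistic simulation iff it
is a probabilistic weak forward simulation. -/
theorem isSimulation_iff_isWFSimulation {α σ τ' : Type}
    (P : PAut α σ) (Q : PAut α τ') (S : σ → PMF τ' → Prop) :
    IsSimulation P Q S ↔ IsWFSimulation P Q S := by
  constructor
  · refine fun h => ⟨?_, fun x a μ' hx ν hS => ?_, fun x ν hx hS => ?_⟩
    · obtain ⟨ν₀, hweak, hlift⟩ := h.init
      obtain ⟨ψ₀, hdlift, rfl⟩ := lift_iff_exists_dlift.mp hlift
      exact ⟨ψ₀, hdlift, hweak⟩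
    · obtain ⟨ν', hweak, hlift⟩ := h.step x a μ' hx ν hS
      obtain ⟨ψ, hdlift, rfl⟩ := lift_iff_exists_dlift.mp hlift
      exact ⟨ψ, hweak, hdlift⟩
    · obtain ⟨ν', hweak, hfinal⟩ := h.final x ν hx hS
      rw [← flat_pure ν'] at hweak hfinal
      exact ⟨PMF.pure ν', support_flat_subset_iff.mp hfinal, hweak⟩
  · refine fun h => ⟨?_, fun x a μ' hx ν hS => ?_, fun x ν hx hS => ?_⟩
    · obtain ⟨ψ₀, hdlift, hweak⟩ := h.init
      exact ⟨flat ψ₀, hweak, hdlift.lift_flat⟩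
    · obtain ⟨ψ, hweak, hdlift⟩ := h.step x a μ' hx ν hS
      exact ⟨flat ψ, hweak, hdlift.lift_flat⟩
    · obtain ⟨ψ, hfinal, hweak⟩ := h.final x ν hx hS
      exact ⟨flat ψ, hweak, support_flat_subset_iff.mpr hfinal⟩

end PCKA
end

section
/- Probabilistic simulation is a precongruence for nondeterministic choice, probabilistic choice and parallel composition: for probabilistic automata P, Q, R with disjoint state spaces, if P ≤ Q then P + R ≤ Q + R, P ⊕_p R ≤ Q ⊕_p R for every p ∈ [0,1], and P ∥_A R ≤ Q ∥_A R for every frame set A of external actions; the same holds when the order of the arguments is reversed. -/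
open scoped ENNReal

namespace PCKA

/-!
A move of one component of a composite automaton is the image of a move of that component under
the inclusion of its states, so an answer of `Q` to a move of `P` is carried into the composite by
pushing distributions forward along the inclusion for `Q`. For the two choices, the remaining states
are matched with themselves. For parallel composition, `(x, y)` is simulated by `ν × δ_y` whenever
`x` is simulated by `ν`; a simultaneous move of `R` acts on the second factor only.

Each operator is commutative up to a bijection of state spaces (exchanging `p` and `1 - p` for
probabilistic choice), so one argument order suffices. Simulations are transported along these
bijections directly: appealing to transitivity of `≤` would require combining weak moves of
unbounded length over countably many states into a single finite one.
-/

section Mix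

variable {X Y : Type} {p q : ℝ≥0∞} (hp : p ≤ 1) (hq : q ≤ 1)

theorem mix_apply (μ ν : PMF X) (x : X) : mix p hp μ ν x = p * μ x + (1 - p) * ν x := rfl

theorem mix_eq_bind (μ ν : PMF X) :
    mix p hp μ ν = (mix p hp (PMF.pure true) (PMF.pure false)).bind (fun b => cond b μ ν) := by
  ext x
  rw [PMF.bind_apply, tsum_bool]
  simp [mix_apply, add_comm]

theorem map_mix (μ ν : PMF X) (f : X → Y) :
    (mix p hp μ ν).map f = mix p hp (μ.map f) (ν.map f) := by
  rw [mix_eq_bind hp μ, mix_eq_bind hp (μ.map f), PMF.map_bind]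
  congr 1
  funext b
  cases b <;> rfl

theorem mix_comm (hpq : p + q = 1) (μ ν : PMF X) : mix p hp μ ν = mix q hq ν μ := by
  have hq' : 1 - p = q := by
    rw [← hpq, ENNReal.add_sub_cancel_left (hp.trans_lt ENNReal.one_lt_top).ne]
  have hp' : 1 - q = p := by
    rw [← hpq, ENNReal.add_sub_cancel_right (hq.trans_lt ENNReal.one_lt_top).ne]
  ext x
  rw [mix_apply, mix_apply, hq', hp', add_comm]

end Mix

section Product

variable {X Y : Type}

theorem pprod_eq_bind_map (μ : PMF X) (ν : PMF Y) :
    pprod μ ν = ν.bind fun y => μ.map fun x => (x, y) :=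
  PMF.bind_comm μ ν fun x y => PMF.pure (x, y)

theorem map_swap_pprod (μ : PMF X) (ν : PMF Y) : (pprod μ ν).map Prod.swap = pprod ν μ := by
  rw [pprod_eq_bind_map ν μ, pprod, PMF.map_bind]
  simp only [PMF.map_comp]
  rfl

theorem pprod_pure (μ : PMF X) (y : Y) : pprod μ (PMF.pure y) = μ.map fun x => (x, y) := by
  rw [pprod_eq_bind_map, PMF.pure_bind]

theorem pure_pprod (x : X) (ν : PMF Y) : pprod (PMF.pure x) ν = ν.map fun y => (x, y) :=
  PMF.pure_bind x _

end Product

section Lifting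

variable {ι : Type*} {X X' Y Y' : Type} {S : X → PMF Y → Prop} {S' : X' → PMF Y' → Prop}
  {μ : PMF X} {ν : PMF Y}

theorem map_congr_of_support {β : Type*} {w : PMF ι} {f g : ι → β}
    (h : ∀ i ∈ w.support, f i = g i) : w.map f = w.map g := by
  ext b
  rw [PMF.map_apply, PMF.map_apply]
  refine tsum_congr fun i => ?_
  by_cases hi : i ∈ w.support
  · rw [h i hi]
  · rw [(w.apply_eq_zero_iff i).mpr hi, ite_self, ite_self]

theorem lift_iff_exists_pmf : Lift S μ ν ↔ ∃ (w : PMF ℕ) (x : ℕ → X) (νs : ℕ → PMF Y),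
    (∀ n, S (x n) (νs n)) ∧ μ = w.map x ∧ ν = w.bind νs := by
  constructor
  · rintro ⟨p, x, νs, hp, hμ, hS, hν⟩
    exact ⟨⟨p, ENNReal.summable.hasSum_iff.mpr hp⟩, x, νs, hS, PMF.ext hμ, PMF.ext hν⟩
  · rintro ⟨w, x, νs, hS, rfl, rfl⟩
    exact ⟨w, x, νs, w.tsum_coe, fun _ => rfl, hS, fun _ => rfl⟩

theorem lift_map_bind_s3 (w : PMF ι) (x : ι → X) (νs : ι → PMF Y)
    (hS : ∀ i ∈ w.support, S (x i) (νs i)) : Lift S (w.map x) (w.bind νs) := by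
  obtain ⟨decode, hdecode⟩ := w.support_countable.exists_eq_range w.support_nonempty
  have decode_mem : ∀ n, decode n ∈ w.support := fun n => hdecode ▸ Set.mem_range_self n
  let encode : ι → ℕ := Function.invFun decode
  have decode_encode : ∀ i ∈ w.support, decode (encode i) = i := fun i hi =>
    Function.invFun_eq (by rwa [hdecode] at hi)
  have hw : (w.map encode).map decode = w := by
    rw [PMF.map_comp]
    exact (map_congr_of_support (g := id) decode_encode).trans w.map_id
  refine lift_iff_exists_pmf.mpr
    ⟨w.map encode, x ∘ decode, νs ∘ decode, fun n => hS _ (decode_mem n), ?_, ?_⟩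
  · rw [← PMF.map_comp, hw]
  · rw [← PMF.bind_map, hw]

theorem lift_pure {x : X} (h : S x ν) : Lift S (PMF.pure x) ν := by
  have := lift_map_bind_s3 (PMF.pure ()) (fun _ => x) (fun _ => ν) fun _ _ => h
  rwa [PMF.pure_map, PMF.pure_bind] at this

theorem lift_map_map (w : PMF ι) (f : ι → X) (g : ι → Y)
    (hS : ∀ i, S (f i) (PMF.pure (g i))) : Lift S (w.map f) (w.map g) :=
  lift_map_bind_s3 w f (PMF.pure ∘ g) fun i _ => hS i

theorem lift_bind (w : PMF ι) (f : ι → PMF X) (g : ι → PMF Y) (h : ∀ i, Lift S (f i) (g i)) :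
    Lift S (w.bind f) (w.bind g) := by
  choose v x νs hS hf hg using fun i => lift_iff_exists_pmf.mp (h i)
  have hlift := lift_map_bind_s3 (w.bind fun i => (v i).map fun n => (i, n))
    (fun k => x k.1 k.2) (fun k => νs k.1 k.2) fun k _ => hS k.1 k.2
  simp only [PMF.map_bind, PMF.bind_bind, PMF.map_comp, PMF.bind_map] at hlift
  rwa [funext hf, funext hg]

theorem Lift.bind (h : Lift S μ ν) {f : X → PMF X'} {g : Y → PMF Y'}
    (hfg : ∀ x ν, S x ν → Lift S' (f x) (ν.bind g)) : Lift S' (μ.bind f) (ν.bind g) := by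
  obtain ⟨w, x, νs, hS, rfl, rfl⟩ := lift_iff_exists_pmf.mp h
  rw [PMF.bind_map, PMF.bind_bind]
  exact lift_bind w _ _ fun n => hfg _ _ (hS n)

theorem Lift.map (h : Lift S μ ν) {f : X → X'} {g : Y → Y'}
    (hfg : ∀ x ν, S x ν → S' (f x) (ν.map g)) : Lift S' (μ.map f) (ν.map g) :=
  h.bind fun x ν hx => lift_pure (hfg x ν hx)

theorem Lift.of_map_left {e : X' → X} (he : Function.Injective e) {μ : PMF X'}
    (h : Lift S (μ.map e) ν) : Lift (fun x => S (e x)) μ ν := by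
  obtain ⟨w, x, νs, hS, hμ, rfl⟩ := lift_iff_exists_pmf.mp h
  have : Nonempty X' := ⟨μ.support_nonempty.some⟩
  obtain ⟨r, hr⟩ := he.hasLeftInverse
  have hμr : μ = w.map (r ∘ x) := by
    rw [← PMF.map_comp, ← hμ, PMF.map_comp, hr.comp_eq_id, PMF.map_id]
  rw [hμr]
  refine lift_map_bind_s3 w _ _ fun n hn => ?_
  obtain ⟨z, -, hz⟩ : ∃ z ∈ μ.support, e z = x n := by
    rw [← PMF.mem_support_map_iff, hμ, PMF.mem_support_map_iff]
    exact ⟨n, hn, rfl⟩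
  have hx : e (r (x n)) = x n := by rw [← hz, hr]
  simpa only [Function.comp_apply, hx] using hS n

theorem Lift.mix {p : ℝ≥0∞} (hp : p ≤ 1) {μ' : PMF X} {ν' : PMF Y} (h : Lift S μ ν)
    (h' : Lift S μ' ν') : Lift S (mix p hp μ μ') (mix p hp ν ν') := by
  rw [mix_eq_bind hp μ, mix_eq_bind hp ν]
  refine lift_bind _ _ _ ?_
  rintro (_ | _) <;> assumption

theorem Lift.pprod_right {Z : Type} {T : X × Z → PMF (Y × Z) → Prop} (h : Lift S μ ν) (ρ : PMF Z)
    (hT : ∀ x ν z, S x ν → T (x, z) (ν.map fun y => (y, z))) :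
    Lift T (pprod μ ρ) (pprod ν ρ) := by
  rw [pprod_eq_bind_map, pprod_eq_bind_map]
  exact lift_bind _ _ _ fun z => h.map fun x ν hx => hT x ν z hx

end Lifting

section Morphisms

variable {α σ τ : Type} {P : PAut α σ} {Q : PAut α τ} {a : Option α} {f : σ → τ} {μ ν : PMF σ}

theorem lift_step_none_refl (P : PAut α σ) (μ : PMF σ) : Lift (step P none) μ μ := by
  have := lift_map_map (S := step P none) μ id id fun _ => Or.inr ⟨rfl, rfl⟩
  rwa [PMF.map_id] at this

theorem WeakStep.of_lift (h : Lift (PCKA.step P a) μ ν) : WeakStep P a μ ν :=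
  ⟨μ, ν, .refl, h, .refl⟩

/-- The state map `f` carries every transition of `P` with the fixed label `a` to a transition of
`Q`. The label is a parameter because inclusions into a parallel composition only preserve labels
outside the frame. -/
def PreservesTrans (a : Option α) (P : PAut α σ) (Q : PAut α τ) (f : σ → τ) : Prop :=
  ∀ x μ, P.trans x a μ → Q.trans (f x) a (μ.map f)

theorem PreservesTrans.step_map (hf : PreservesTrans a P Q f) {x : σ} (h : step P a x μ) :
    step Q a (f x) (μ.map f) := by
  rcases h with h | ⟨rfl, rfl⟩
  · exact Or.inl (hf _ _ h)
  · exact Or.inr ⟨rfl, PMF.pure_map _ _⟩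

theorem PreservesTrans.weakTau_map (hf : PreservesTrans none P Q f) (h : WeakTau P μ ν) :
    WeakTau Q (μ.map f) (ν.map f) :=
  Relation.ReflTransGen.lift (PMF.map f)
    (fun _ _ hstep => hstep.map fun _ _ => hf.step_map) _ _ h

theorem PreservesTrans.weakStep_map (hnone : PreservesTrans none P Q f)
    (ha : PreservesTrans a P Q f) (h : WeakStep P a μ ν) :
    WeakStep Q a (μ.map f) (ν.map f) := by
  obtain ⟨μ₁, μ₂, hbefore, hstep, hafter⟩ := h
  exact ⟨_, _, hnone.weakTau_map hbefore, hstep.map fun _ _ => ha.step_map,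
    hnone.weakTau_map hafter⟩

end Morphisms

section Extension

variable {α σ τ X Y : Type} {κ : Type*} {P : PAut α σ} {Q : PAut α τ} {P' : PAut α X}
  {Q' : PAut α Y} {S : σ → PMF τ → Prop} {f : σ → X} {g : τ → Y} {d : κ → X} {e : κ → Y}

/-- The extension of a relation `S` along inclusions `f`, `g` of its two sides into larger state
spaces, which have the further states `d k` and `e k` in common. It is the simulation between two
choices with a common argument. -/
inductive ExtendRel (S : σ → PMF τ → Prop) (f : σ → X) (g : τ → Y) (d : κ → X) (e : κ → Y) :
    X → PMF Y → Prop
  | image {x : σ} {ν : PMF τ} (h : S x ν) : ExtendRel S f g d e (f x) (ν.map g)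
  | common (k : κ) : ExtendRel S f g d e (d k) (PMF.pure (e k))

theorem Lift.extendRel {μ : PMF σ} {ν : PMF τ} (h : Lift S μ ν) :
    Lift (ExtendRel S f g d e) (μ.map f) (ν.map g) :=
  h.map fun _ _ => .image

theorem lift_extendRel_common {ι : Type*} (w : PMF ι) (k : ι → κ) :
    Lift (ExtendRel S f g d e) (w.map fun i => d (k i)) (w.map fun i => e (k i)) :=
  lift_map_map w _ _ fun i => .common (k i)

theorem IsSimulation.extend (hS : IsSimulation P Q S)
    (hinit : ∃ ν, WeakTau Q' Q'.init ν ∧ Lift (ExtendRel S f g d e) P'.init ν)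
    (hf : ∀ x a μ', P'.trans (f x) a μ' → ∃ μ, P.trans x a μ ∧ μ' = μ.map f)
    (hg : ∀ a, PreservesTrans a Q Q' g)
    (hcommon : ∀ k a μ, P'.trans (d k) a μ →
      ∃ ν, WeakStep Q' a (PMF.pure (e k)) ν ∧ Lift (ExtendRel S f g d e) μ ν)
    (hf_final : ∀ x, f x ∈ P'.final → x ∈ P.final) (hg_final : ∀ y ∈ Q.final, g y ∈ Q'.final)
    (hcommon_final : ∀ k, d k ∈ P'.final → e k ∈ Q'.final) :
    IsSimulation P' Q' (ExtendRel S f g d e) where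
  init := hinit
  step := by
    rintro _ a _ ht _ (⟨hν⟩ | k)
    · obtain ⟨μ, hμ, rfl⟩ := hf _ _ _ ht
      obtain ⟨ν', hweak, hlift⟩ := hS.step _ _ _ hμ _ hν
      exact ⟨_, (hg none).weakStep_map (hg a) hweak, hlift.extendRel⟩
    · exact hcommon k a _ ht
  final := by
    rintro _ _ hx (⟨hν⟩ | k)
    · obtain ⟨ν', hweak, hfinal⟩ := hS.final _ _ (hf_final _ hx) hν
      refine ⟨_, (hg none).weakTau_map hweak, ?_⟩
      rw [PMF.support_map, Set.forall_mem_image]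
      exact fun y hy => hg_final y (hfinal y hy)
    · refine ⟨_, .refl, ?_⟩
      simpa only [PMF.support_pure, Set.mem_singleton_iff, forall_eq] using hcommon_final k hx

end Extension

section Homomorphisms

variable {α σ τ : Type} {P : PAut α σ} {Q : PAut α τ}

/-- Morphisms of automata: state maps preserving transitions, the initial distribution and final
states. Simulations are transported along them. -/
structure IsHom (P : PAut α σ) (Q : PAut α τ) (f : σ → τ) : Prop where
  trans : ∀ a, PreservesTrans a P Q f
  init : P.init.map f = Q.init
  final : ∀ x ∈ P.final, f x ∈ Q.final

theorem Sim.trans_isHom {τ' : Type} {Q' : PAut α τ'} {f : τ → τ'} (h : Sim P Q)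
    (hf : IsHom Q Q' f) : Sim P Q' := by
  obtain ⟨S, hS⟩ := h
  obtain ⟨ν, hweak, hlift⟩ := hS.init
  have hlift' := hlift.extendRel (f := id) (g := f) (d := Empty.elim) (e := Empty.elim)
  rw [PMF.map_id] at hlift'
  have hweak' : WeakTau Q' Q'.init (ν.map f) := hf.init ▸ (hf.trans none).weakTau_map hweak
  exact ⟨_, hS.extend ⟨_, hweak', hlift'⟩ (fun _ _ μ hμ => ⟨μ, hμ, μ.map_id.symm⟩) hf.trans
    nofun (fun _ hx => hx) hf.final nofun⟩

theorem IsHom.trans_sim {σ' : Type} {P' : PAut α σ'} {e : σ' → σ} (he : IsHom P' P e)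
    (hinj : Function.Injective e) (h : Sim P Q) : Sim P' Q := by
  obtain ⟨S, hS⟩ := h
  refine ⟨fun x => S (e x), ?_, ?_, ?_⟩
  · obtain ⟨ν, hweak, hlift⟩ := hS.init
    rw [← he.init] at hlift
    exact ⟨ν, hweak, hlift.of_map_left hinj⟩
  · intro x a μ ht ν hν
    obtain ⟨ν', hweak, hlift⟩ := hS.step _ _ _ (he.trans a x μ ht) ν hν
    exact ⟨ν', hweak, hlift.of_map_left hinj⟩
  · exact fun x ν hx hν => hS.final _ ν (he.final x hx) hν

end Homomorphisms

section NondeterministicChoice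

variable {α σ₁ σ₂ σ₃ : Type} {P : PAut α σ₁} {Q : PAut α σ₂}

theorem nchoice_swap (P : PAut α σ₁) (R : PAut α σ₃) :
    IsHom (nchoice P R) (nchoice R P) (Option.map Sum.swap) where
  trans := by
    rintro a (_ | x | y) _ h
    · obtain ⟨rfl, rfl | rfl⟩ := h
      · exact ⟨rfl, Or.inr (PMF.map_comp _ _ _)⟩
      · exact ⟨rfl, Or.inl (PMF.map_comp _ _ _)⟩
    all_goals
      obtain ⟨μ, hμ, rfl⟩ := h
      exact ⟨μ, hμ, PMF.map_comp _ _ _⟩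
  init := PMF.pure_map _ _
  final := by
    rintro _ (⟨x, hx, rfl⟩ | ⟨y, hy, rfl⟩)
    · exact Or.inr ⟨x, hx, rfl⟩
    · exact Or.inl ⟨y, hy, rfl⟩

theorem Sim.nchoice_right (h : Sim P Q) (R : PAut α σ₃) : Sim (nchoice P R) (nchoice Q R) := by
  obtain ⟨S, hS⟩ := h
  have hg : ∀ a, PreservesTrans a Q (nchoice Q R) fun x => some (Sum.inl x) :=
    fun a x μ hμ => ⟨μ, hμ, rfl⟩
  refine ⟨_, hS.extend (f := fun x => some (Sum.inl x)) (g := fun x => some (Sum.inl x))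
    (d := Option.map Sum.inr) (e := Option.map Sum.inr)
    ⟨_, .refl, lift_pure (.common none)⟩ (fun _ _ _ hμ => hμ) hg ?_ ?_ ?_ ?_⟩
  · rintro (_ | y) a _ hμ
    · obtain ⟨rfl, rfl | rfl⟩ := hμ
      · obtain ⟨ν, hweak, hlift⟩ := hS.init
        exact ⟨_, ⟨_, _, .refl, lift_pure (Or.inl ⟨rfl, Or.inl rfl⟩), (hg none).weakTau_map hweak⟩,
          hlift.extendRel⟩
      · exact ⟨_, .of_lift (lift_pure (Or.inl ⟨rfl, Or.inr rfl⟩)),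
          lift_extendRel_common R.init some⟩
    · obtain ⟨ρ, hρ, rfl⟩ := hμ
      exact ⟨_, .of_lift (lift_pure (Or.inl ⟨ρ, hρ, rfl⟩)), lift_extendRel_common ρ some⟩
  · simp [nchoice]
  · simp [nchoice]
  · rintro (_ | y) <;> simp [nchoice]

theorem Sim.nchoice_left (h : Sim P Q) (R : PAut α σ₃) : Sim (nchoice R P) (nchoice R Q) :=
  (nchoice_swap R P).trans_sim (Option.map_injective Sum.swap_leftInverse.injective)
    ((h.nchoice_right R).trans_isHom (nchoice_swap Q R))

end NondeterministicChoice

section ProbabilisticChoice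

variable {α σ₁ σ₂ σ₃ : Type} {P : PAut α σ₁} {Q : PAut α σ₂}

theorem pchoice_swap {p q : ℝ≥0∞} (hp : p ≤ 1) (hq : q ≤ 1) (hpq : p + q = 1) (P : PAut α σ₁)
    (R : PAut α σ₃) : IsHom (pchoice p hp P R) (pchoice q hq R P) Sum.swap where
  trans := by
    rintro a (x | y) _ ⟨μ, hμ, rfl⟩ <;> exact ⟨μ, hμ, PMF.map_comp _ _ _⟩
  init := by
    simp only [pchoice, map_mix, PMF.map_comp]
    exact mix_comm hp hq hpq _ _
  final := by
    rintro _ (⟨x, hx, rfl⟩ | ⟨y, hy, rfl⟩)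
    · exact Or.inr ⟨x, hx, rfl⟩
    · exact Or.inl ⟨y, hy, rfl⟩

theorem Sim.pchoice_right (h : Sim P Q) (p : ℝ≥0∞) (hp : p ≤ 1) (R : PAut α σ₃) :
    Sim (pchoice p hp P R) (pchoice p hp Q R) := by
  obtain ⟨S, hS⟩ := h
  have hg : ∀ a, PreservesTrans a Q (pchoice p hp Q R) Sum.inl := fun a x μ hμ => ⟨μ, hμ, rfl⟩
  refine ⟨_, hS.extend (f := Sum.inl) (d := Sum.inr) (e := Sum.inr) ?_ (fun _ _ _ hμ => hμ) hg
    ?_ ?_ ?_ ?_⟩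
  · obtain ⟨ν, hweak, hlift⟩ := hS.init
    refine ⟨mix p hp (ν.map Sum.inl) (R.init.map Sum.inr), ?_,
      hlift.extendRel.mix hp (lift_extendRel_common R.init id)⟩
    exact Relation.ReflTransGen.lift (fun μ => mix p hp (μ.map Sum.inl) (R.init.map Sum.inr))
      (fun _ _ hstep => (hstep.map fun _ _ => (hg none).step_map).mix hp
        (lift_step_none_refl _ _)) _ _ hweak
  · rintro y a _ ⟨ρ, hρ, rfl⟩
    exact ⟨_, .of_lift (lift_pure (Or.inl ⟨ρ, hρ, rfl⟩)), lift_extendRel_common ρ id⟩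
  all_goals simp [pchoice]

theorem Sim.pchoice_left (h : Sim P Q) (p : ℝ≥0∞) (hp : p ≤ 1) (R : PAut α σ₃) :
    Sim (pchoice p hp R P) (pchoice p hp R Q) := by
  have hq : 1 - p ≤ 1 := tsub_le_self
  exact (pchoice_swap hp hq (add_tsub_cancel_of_le hp) R P).trans_sim
    Sum.swap_leftInverse.injective
    ((h.pchoice_right (1 - p) hq R).trans_isHom
      (pchoice_swap hq hp (tsub_add_cancel_of_le hp) Q R))

end ProbabilisticChoice

section ParallelComposition

variable {α σ₁ σ₂ σ₃ : Type} {A : Set α} {a : Option α} {P : PAut α σ₁} {Q : PAut α σ₂}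
  {R : PAut α σ₃}

theorem par_swap (A : Set α) (P : PAut α σ₁) (R : PAut α σ₃) :
    IsHom (par A P R) (par A R P) Prod.swap where
  trans := by
    rintro a ⟨x, y⟩ _ ⟨μ, ρ, rfl, h⟩
    refine ⟨ρ, μ, map_swap_pprod μ ρ, ?_⟩
    rcases h with ⟨b, hb, rfl, hμ, hρ⟩ | h | h
    · exact Or.inl ⟨b, hb, rfl, hρ, hμ⟩
    · exact Or.inr (Or.inr h)
    · exact Or.inr (Or.inl h)
  init := map_swap_pprod _ _
  final := fun _ hx => hx.symm

theorem preservesTrans_par_left (ha : ∀ b ∈ A, a ≠ some b) (y : σ₃) :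
    PreservesTrans a Q (par A Q R) fun x => (x, y) :=
  fun _ μ hμ => ⟨μ, PMF.pure y, (pprod_pure μ y).symm, Or.inr (Or.inl ⟨ha, hμ, rfl⟩)⟩

theorem preservesTrans_none_par_left (A : Set α) (Q : PAut α σ₂) (R : PAut α σ₃) (y : σ₃) :
    PreservesTrans none Q (par A Q R) fun x => (x, y) :=
  preservesTrans_par_left (fun b _ => (Option.some_ne_none b).symm) y

theorem WeakTau.pprod_right {μ ν : PMF σ₂} (h : WeakTau Q μ ν) (A : Set α) (R : PAut α σ₃)
    (ρ : PMF σ₃) : WeakTau (par A Q R) (pprod μ ρ) (pprod ν ρ) :=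
  Relation.ReflTransGen.lift (fun μ => pprod μ ρ)
    (fun _ _ hstep => hstep.pprod_right ρ fun _ _ y =>
      (preservesTrans_none_par_left A Q R y).step_map) _ _ h

theorem lift_step_par_sync {b : α} (hb : b ∈ A) {μ ν : PMF σ₂} {y : σ₃} {ρ : PMF σ₃}
    (h : Lift (step Q (some b)) μ ν) (hρ : R.trans y (some b) ρ) :
    Lift (step (par A Q R) (some b)) (μ.map fun x => (x, y)) (pprod ν ρ) := by
  refine h.bind fun x ν hstep => lift_pure ?_
  obtain hν | ⟨⟨⟩, -⟩ := hstep
  exact Or.inl ⟨ν, ρ, rfl, Or.inl ⟨b, hb, rfl, hν, hρ⟩⟩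

theorem lift_step_par_right (ha : ∀ b ∈ A, a ≠ some b) (μ : PMF σ₂) {y : σ₃} {ρ : PMF σ₃}
    (hρ : R.trans y a ρ) : Lift (step (par A Q R) a) (μ.map fun x => (x, y)) (pprod μ ρ) :=
  lift_map_bind_s3 μ _ _ fun x _ =>
    Or.inl ⟨PMF.pure x, ρ, (pure_pprod x ρ).symm, Or.inr (Or.inr ⟨ha, hρ, rfl⟩)⟩

/-- The relation `(x, y) ↦ ν × δ_y` for `x S ν`, which simulates a parallel composition. -/
def ParRel (S : σ₁ → PMF σ₂ → Prop) (s : σ₁ × σ₃) (ν : PMF (σ₂ × σ₃)) : Prop :=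
  ∃ ν', S s.1 ν' ∧ ν = ν'.map fun x => (x, s.2)

theorem Lift.parRel {S : σ₁ → PMF σ₂ → Prop} {μ : PMF σ₁} {ν : PMF σ₂} (h : Lift S μ ν)
    (ρ : PMF σ₃) : Lift (ParRel S) (pprod μ ρ) (pprod ν ρ) :=
  h.pprod_right ρ fun _ ν _ hx => ⟨ν, hx, rfl⟩

theorem IsSimulation.exists_weakStep_par {S : σ₁ → PMF σ₂ → Prop} (hS : IsSimulation P Q S)
    {x : σ₁} {y : σ₃} {μ : PMF (σ₁ × σ₃)} (ht : (par A P R).trans (x, y) a μ) {ν : PMF σ₂}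
    (hν : S x ν) :
    ∃ ν', WeakStep (par A Q R) a (ν.map fun z => (z, y)) ν' ∧ Lift (ParRel S) μ ν' := by
  have hnone := preservesTrans_none_par_left A Q R y
  obtain ⟨μ, ρ, rfl, ⟨b, hb, rfl, hμ, hρ⟩ | ⟨ha, hμ, rfl⟩ | ⟨ha, hρ, rfl⟩⟩ := ht
  · obtain ⟨ν', ⟨ν₁, ν₂, hbefore, hstep, hafter⟩, hlift⟩ := hS.step _ _ _ hμ ν hν
    exact ⟨pprod ν' ρ, ⟨_, pprod ν₂ ρ, hnone.weakTau_map hbefore, lift_step_par_sync hb hstep hρ,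
      hafter.pprod_right A R ρ⟩, hlift.parRel ρ⟩
  · obtain ⟨ν', hweak, hlift⟩ := hS.step _ _ _ hμ ν hν
    refine ⟨pprod ν' (PMF.pure y), ?_, hlift.parRel _⟩
    rw [pprod_pure]
    exact hnone.weakStep_map (preservesTrans_par_left ha y) hweak
  · exact ⟨pprod ν ρ, .of_lift (lift_step_par_right ha ν hρ), (lift_pure hν).parRel ρ⟩

theorem Sim.par_right (h : Sim P Q) (A : Set α) (R : PAut α σ₃) :
    Sim (par A P R) (par A Q R) := by
  obtain ⟨S, hS⟩ := h
  refine ⟨ParRel S, ?_, ?_, ?_⟩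
  · obtain ⟨ν, hweak, hlift⟩ := hS.init
    exact ⟨pprod ν R.init, hweak.pprod_right A R R.init, hlift.parRel R.init⟩
  · rintro ⟨x, y⟩ a μ ht _ ⟨ν, hν, rfl⟩
    exact hS.exists_weakStep_par ht hν
  · rintro ⟨x, y⟩ _ ⟨hx, hy⟩ ⟨ν, hν, rfl⟩
    obtain ⟨ν', hweak, hfinal⟩ := hS.final x ν hx hν
    refine ⟨_, (preservesTrans_none_par_left A Q R y).weakTau_map hweak, ?_⟩
    rw [PMF.support_map, Set.forall_mem_image]
    exact fun z hz => ⟨hfinal z hz, hy⟩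

theorem Sim.par_left (h : Sim P Q) (A : Set α) (R : PAut α σ₃) :
    Sim (par A R P) (par A R Q) :=
  (par_swap A R P).trans_sim Prod.swap_injective
    ((h.par_right A R).trans_isHom (par_swap A Q R))

end ParallelComposition

/-- simulation is a precongruence for nondeterministic choice,
probabilistic choice and parallel composition (in both argument orders). -/
theorem sim_precongruence_choices_par {α σ₁ σ₂ σ₃ : Type}
    (P : PAut α σ₁) (Q : PAut α σ₂) (R : PAut α σ₃) (h : Sim P Q) :
    (Sim (nchoice P R) (nchoice Q R) ∧ Sim (nchoice R P) (nchoice R Q)) ∧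
    (∀ (p : ℝ≥0∞) (hp : p ≤ 1),
      Sim (pchoice p hp P R) (pchoice p hp Q R) ∧
      Sim (pchoice p hp R P) (pchoice p hp R Q)) ∧
    (∀ (E A : Set α), A ⊆ E →
      Sim (par A P R) (par A Q R) ∧ Sim (par A R P) (par A R Q)) := by
  refine ⟨⟨h.nchoice_right R, h.nchoice_left R⟩, fun p hp => ?_, fun _ A _ => ?_⟩
  · exact ⟨h.pchoice_right p hp R, h.pchoice_left p hp R⟩
  · exact ⟨h.par_right A R, h.par_left A R⟩

end PCKA
end

section
/- Sequential composition of probabilistic automata satisfies the unit and left-zero laws up to simulation equivalence: for every probabilistic automaton P, P ≡ P · 1, P ≡ 1 · P, and 0 ≡ 0 · P, where 1 is the skip automaton and 0 is the deadlock automaton. -/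
open scoped ENNReal

namespace PCKA

/-!
A state of `P` or `Q` is matched with the point mass at its copy in `P · Q` and conversely. If `P`
is silent, then `Q` can wait in its initial distribution while `P` runs, so `P · Q ≤ Q`. If `Q` is
silent, then a state of `Q` in `P · Q` is matched with *every* distribution on final states of `P`:
the final state from which `Q` was entered has been forgotten, which is why this one simulation is
not the graph of a function. Where `P` has no final state, `Q` is never entered, so the right unit
and left zero laws are two cases of one statement.
-/

section Lift

variable {ι : Type*} {X Y : Type} {S : X → PMF Y → Prop}

theorem exists_pmf_nat_map_eq (μ : PMF ι) :
    ∃ (p : PMF ℕ) (x : ℕ → ι), (∀ n, x n ∈ μ.support) ∧ p.map x = μ := by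
  obtain ⟨x, hx⟩ := μ.support_countable.exists_eq_range μ.support_nonempty
  have section_eq : ∀ a ∈ μ.support, x (Function.invFun x a) = a := by
    rw [hx]
    exact fun a ha => Function.invFun_eq ha
  refine ⟨μ.map (Function.invFun x), x, fun n => hx ▸ Set.mem_range_self n, ?_⟩
  rw [PMF.map_comp]
  ext b
  rw [← PMF.bind_pure_comp, PMF.bind_apply]
  calc ∑' a, μ a * PMF.pure (x (Function.invFun x a)) b
      = ∑' a, μ a * PMF.pure a b := tsum_congr fun a => by
        by_cases ha : a ∈ μ.support
        · rw [section_eq a ha]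
        · rw [(μ.apply_eq_zero_iff a).2 ha, zero_mul, zero_mul]
    _ = μ b := by rw [← PMF.bind_apply, PMF.bind_pure]

theorem Lift.map_bind (p : PMF ι) (x : ι → X) (ν : ι → PMF Y)
    (h : ∀ i ∈ p.support, S (x i) (ν i)) : Lift S (p.map x) (p.bind ν) := by
  obtain ⟨q, i, hi, rfl⟩ := exists_pmf_nat_map_eq p
  refine ⟨q, x ∘ i, ν ∘ i, q.tsum_coe, fun s => ?_, fun n => h _ (hi n), fun t => ?_⟩
  · rw [PMF.map_comp, ← PMF.bind_pure_comp, PMF.bind_apply]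
    rfl
  · rw [PMF.bind_map, PMF.bind_apply]

theorem Lift.map_const (p : PMF ι) (x : ι → X) {ν : PMF Y} (h : ∀ i ∈ p.support, S (x i) ν) :
    Lift S (p.map x) ν := by
  simpa only [PMF.bind_const] using Lift.map_bind p x (fun _ => ν) h

theorem Lift.map_left (μ : PMF Y) (x : Y → X) (h : ∀ y, S (x y) (PMF.pure y)) :
    Lift S (μ.map x) μ := by
  simpa only [PMF.bind_pure] using Lift.map_bind μ x PMF.pure fun y _ => h y

theorem Lift.pure {x : X} {ν : PMF Y} (h : S x ν) : Lift S (PMF.pure x) ν := by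
  simpa only [PMF.pure_map] using Lift.map_const (PMF.pure ()) (fun _ => x) fun _ _ => h

theorem Lift.graph (μ : PMF X) (f : X → PMF Y) : Lift (fun x ν => ν = f x) μ (μ.bind f) := by
  simpa only [PMF.map_id] using Lift.map_bind (S := fun x ν => ν = f x) μ id f fun _ _ => rfl

end Lift

section Simulation

variable {α σ τ' : Type} {P : PAut α σ} {Q : PAut α τ'}

theorem WeakTau.of_trans {x : σ} {μ : PMF σ} (h : P.trans x none μ) : WeakTau P (PMF.pure x) μ :=
  .single (.pure (.inl h))

theorem WeakStep.of_trans {a : Option α} {x : σ} {μ : PMF σ} (h : P.trans x a μ) :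
    WeakStep P a (PMF.pure x) μ :=
  ⟨_, _, .refl, .pure (.inl h), .refl⟩

theorem WeakStep.refl (μ : PMF σ) : WeakStep P none μ μ := by
  have lift_refl : Lift (step P none) μ μ := by
    simpa only [PMF.map_id] using Lift.map_left μ id fun _ => .inr ⟨rfl, rfl⟩
  exact ⟨μ, μ, .refl, lift_refl, .refl⟩

theorem Sim.of_graph (f : σ → PMF τ') (init : WeakTau Q Q.init (P.init.bind f))
    (step : ∀ x a μ, P.trans x a μ → WeakStep Q a (f x) (μ.bind f))
    (final : ∀ x ∈ P.final, ∃ ν, WeakTau Q (f x) ν ∧ ν.support ⊆ Q.final) : Sim P Q := by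
  refine ⟨fun x ν => ν = f x, ⟨_, init, .graph _ f⟩, ?_, ?_⟩
  · rintro x a μ h _ rfl
    exact ⟨_, step x a μ h, .graph μ f⟩
  · rintro x _ hx rfl
    exact final x hx

end Simulation

/-- An automaton is silent if all its transitions are labelled `τ`, so that running it as one of
the two factors of a sequential composition cannot be observed. -/
def PAut.IsSilent {α σ : Type} (P : PAut α σ) : Prop :=
  ∀ x a μ, P.trans x a μ → a = none

theorem skip_isSilent (α : Type) : (skip α).IsSilent := fun _ _ _ => False.elim

section SequentialComposition

variable {α σ τ' : Type} {P : PAut α σ} {Q : PAut α τ'}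

theorem sim_pseq_left (hQ : P.final.Nonempty → Q.init.support ⊆ Q.final) : Sim P (pseq P Q) := by
  refine .of_graph (PMF.pure ∘ Sum.inl) ?_ (fun x a μ h => ?_) fun x hx => ?_
  · rw [PMF.bind_pure_comp]
    exact .refl
  · rw [PMF.bind_pure_comp]
    exact .of_trans (.inl ⟨μ, h, rfl⟩)
  · refine ⟨Q.init.map Sum.inr, .of_trans (.inr ⟨rfl, hx, rfl⟩), ?_⟩
    rw [PMF.support_map]
    rintro _ ⟨y, hy, rfl⟩
    exact ⟨y, hQ ⟨x, hx⟩ hy, rfl⟩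

theorem pseq_sim_left (hQ : P.final.Nonempty → Q.IsSilent) : Sim (pseq P Q) P := by
  let S : σ ⊕ τ' → PMF σ → Prop :=
    Sum.elim (fun x ν => ν = PMF.pure x) fun _ ν => ν.support ⊆ P.final
  have lift_inl (μ : PMF σ) : Lift S (μ.map Sum.inl) μ := .map_left μ _ fun _ => rfl
  have lift_inr (μ : PMF τ') {ν : PMF σ} (hν : ν.support ⊆ P.final) : Lift S (μ.map Sum.inr) ν :=
    .map_const μ _ fun _ _ => hν
  refine ⟨S, ⟨P.init, .refl, lift_inl _⟩, ?_, ?_⟩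
  · rintro (x | y) a _ h ν hν
    · obtain rfl : ν = PMF.pure x := hν
      rcases h with ⟨μ, h, rfl⟩ | ⟨rfl, hx, rfl⟩
      · exact ⟨μ, .of_trans h, lift_inl μ⟩
      · refine ⟨PMF.pure x, .refl _, lift_inr Q.init ?_⟩
        rwa [PMF.support_pure, Set.singleton_subset_iff]
    · obtain ⟨μ, h, rfl⟩ := h
      obtain rfl := hQ (ν.support_nonempty.mono hν) y a μ h
      exact ⟨ν, .refl ν, lift_inr μ hν⟩
  · rintro _ ν ⟨y, -, rfl⟩ hν
    exact ⟨ν, .refl, hν⟩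

theorem simEquiv_pseq_left (hsilent : P.final.Nonempty → Q.IsSilent)
    (hfinal : P.final.Nonempty → Q.init.support ⊆ Q.final) : SimEquiv P (pseq P Q) :=
  ⟨sim_pseq_left hfinal, pseq_sim_left hsilent⟩

theorem sim_pseq_right (hP : P.init.support ⊆ P.final) : Sim Q (pseq P Q) := by
  refine .of_graph (PMF.pure ∘ Sum.inr) ?_ (fun y a ν h => ?_) fun y hy => ?_
  · rw [PMF.bind_pure_comp]
    exact .single (.map_const P.init _ fun x hx => .inl (.inr ⟨rfl, hP hx, rfl⟩))
  · rw [PMF.bind_pure_comp]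
    exact .of_trans ⟨ν, h, rfl⟩
  · refine ⟨_, .refl, ?_⟩
    rw [Function.comp_apply, PMF.support_pure, Set.singleton_subset_iff]
    exact ⟨y, hy, rfl⟩

theorem pseq_sim_right (hP : P.IsSilent) : Sim (pseq P Q) Q := by
  let f : σ ⊕ τ' → PMF τ' := Sum.elim (fun _ => Q.init) PMF.pure
  have bind_inl (μ : PMF σ) : (μ.map Sum.inl).bind f = Q.init := by
    rw [PMF.bind_map, Sum.elim_comp_inl, PMF.bind_const]
  have bind_inr (ν : PMF τ') : (ν.map Sum.inr).bind f = ν := by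
    rw [PMF.bind_map, Sum.elim_comp_inr, PMF.bind_pure]
  refine .of_graph f ((bind_inl P.init).symm ▸ .refl) ?_ ?_
  · rintro (x | y) a _ h
    · rcases h with ⟨μ, h, rfl⟩ | ⟨rfl, -, rfl⟩
      · obtain rfl := hP x a μ h
        rw [bind_inl]
        exact .refl Q.init
      · rw [bind_inr]
        exact .refl Q.init
    · obtain ⟨ν, h, rfl⟩ := h
      rw [bind_inr]
      exact .of_trans h
  · rintro _ ⟨y, hy, rfl⟩
    refine ⟨PMF.pure y, .refl, ?_⟩
    rwa [PMF.support_pure, Set.singleton_subset_iff]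

theorem simEquiv_pseq_right (hsilent : P.IsSilent) (hfinal : P.init.support ⊆ P.final) :
    SimEquiv Q (pseq P Q) :=
  ⟨sim_pseq_right hfinal, pseq_sim_right hsilent⟩

end SequentialComposition

/-- unit and left-zero laws for sequential composition up to
simulation equivalence: `P ≡ P · 1`, `P ≡ 1 · P` and `0 ≡ 0 · P`. -/
theorem seq_unit_and_zero {α σ : Type} (P : PAut α σ) :
    SimEquiv P (pseq P (skip α)) ∧
    SimEquiv P (pseq (skip α) P) ∧
    SimEquiv (deadlock α) (pseq (deadlock α) P) := by
  have skip_init_final : (skip α).init.support ⊆ (skip α).final := Set.subset_univ _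
  have deadlock_final : ¬ (deadlock α).final.Nonempty := Set.not_nonempty_empty
  exact ⟨simEquiv_pseq_left (fun _ => skip_isSilent α) fun _ => skip_init_final,
    simEquiv_pseq_right (skip_isSilent α) skip_init_final,
    simEquiv_pseq_left (fun h => (deadlock_final h).elim) fun h => (deadlock_final h).elim⟩

end PCKA
end
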